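/- arXiv:2203.05074 — 7 statements merged into one kernel-verified Lean document; each statement's English description precedes it below -/
import Mathlib

section
/- Let X, Y, Z be random variables taking values in finite nonempty types, described by a joint probability mass function p with all joint and marginal probabilities strictly positive. Then the mutual information satisfies I(X;Z) ≥ I(X;Y) + I(Y;Z) − H(Y). (Transitive Information theorem.) -/
/-!
After cancelling marginal entropies the claim reads `H(X,Z) + H(Y) ≤ H(X,Y) + H(Y,Z)`, which is
submodularity of entropy combined with `H(X,Z) ≤ H(X,Y,Z)`. Both are obtained at once: with
`q, r, s, t` the marginals on `XY`, `YZ`, `Y`, `XZ`, the inequality `log u ≤ u - 1` and `p ≤ t` give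
`p * log (q r / (t s)) ≤ p (q r / (t s) - 1) ≤ q r / s - p` (`mul_log_le`). Summing over all
`(x, y, z)`, the right-hand side vanishes because `∑ q r / s` and `∑ p` both equal `∑ s`
(`sum_log_marginals_le`).
-/

open scoped BigOperators

/-- Shannon entropy (natural log) of a pmf on a finite type. -/
noncomputable def entropy {α : Type*} [Fintype α] (p : α → ℝ) : ℝ :=
  -∑ a, p a * Real.log (p a)

/-- Mutual information of a joint pmf on a finite product type. -/
noncomputable def mutualInfo {α β : Type*} [Fintype α] [Fintype β] (p : α × β → ℝ) : ℝ :=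
  entropy (fun a => ∑ b, p (a, b)) + entropy (fun b => ∑ a, p (a, b)) - entropy p

/-- The pointwise inequality: `log u ≤ u - 1` at `u = q r / (t s)`, then `p ≤ t`. -/
lemma mul_log_le {p q r s t : ℝ} (hp : 0 < p) (hq : 0 < q) (hr : 0 < r) (hs : 0 < s)
    (hpt : p ≤ t) :
    p * (Real.log q + Real.log r - Real.log t - Real.log s) ≤ q * r / s - p := by
  have ht : 0 < t := hp.trans_le hpt
  have hlog : Real.log (q * r / (t * s)) =
      Real.log q + Real.log r - Real.log t - Real.log s := by
    rw [Real.log_div (by positivity) (by positivity), Real.log_mul hq.ne' hr.ne',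
      Real.log_mul ht.ne' hs.ne']
    ring
  have hu := Real.log_le_sub_one_of_pos (show 0 < q * r / (t * s) by positivity)
  rw [hlog] at hu
  have h1 := mul_le_mul_of_nonneg_left hu hp.le
  have h2 : p * (q * r / (t * s)) ≤ q * r / s := by
    have h3 : p * (q * r / (t * s)) = (p / t) * (q * r / s) := by field_simp
    rw [h3]
    exact mul_le_of_le_one_left (by positivity) ((div_le_one ht).2 hpt)
  linarith

/-- The inequality `H(X,Z) + H(Y) ≤ H(X,Y) + H(Y,Z)`, with every entropy written as an
average over the full joint distribution. -/
lemma sum_log_marginals_le {X Y Z : Type*} [Fintype X] [Fintype Y] [Fintype Z]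
    [Nonempty X] [Nonempty Y] [Nonempty Z]
    (P : X → Y → Z → ℝ) (hP : ∀ x y z, 0 < P x y z) :
    ∑ y, ∑ x, ∑ z, P x y z * (Real.log (∑ z', P x y z') + Real.log (∑ x', P x' y z)
      - Real.log (∑ y', P x y' z) - Real.log (∑ x', ∑ z', P x' y z')) ≤ 0 := by
  have hq : ∀ x y, 0 < ∑ z, P x y z := fun x y =>
    Finset.sum_pos (fun z _ => hP x y z) Finset.univ_nonempty
  have hr : ∀ y z, 0 < ∑ x, P x y z := fun y z =>
    Finset.sum_pos (fun x _ => hP x y z) Finset.univ_nonempty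
  have hs : ∀ y, 0 < ∑ x, ∑ z, P x y z := fun y =>
    Finset.sum_pos (fun x _ => hq x y) Finset.univ_nonempty
  refine Finset.sum_nonpos fun y _ => ?_
  calc _ ≤ ∑ x, ∑ z, ((∑ z', P x y z') * (∑ x', P x' y z) / (∑ x', ∑ z', P x' y z')
        - P x y z) :=
        Finset.sum_le_sum fun x _ => Finset.sum_le_sum fun z _ =>
          mul_log_le (hP x y z) (hq x y) (hr y z) (hs y)
            (Finset.single_le_sum (f := fun y' => P x y' z)
              (fun y' _ => (hP x y' z).le) (Finset.mem_univ y))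
    _ = (∑ x, ∑ z, P x y z) * (∑ z, ∑ x, P x y z) / (∑ x, ∑ z, P x y z)
        - ∑ x, ∑ z, P x y z := by
        simp only [Finset.sum_sub_distrib, ← Finset.sum_div, Finset.sum_mul_sum]
    _ = 0 := by
        rw [mul_div_cancel_left₀ _ (hs y).ne', Finset.sum_comm, sub_self]

/-- **Transitive Information theorem.**  For random variables `X, Y, Z` on finite
nonempty types with strictly positive joint pmf `p`,
`I(X;Z) ≥ I(X;Y) + I(Y;Z) − H(Y)`. -/
theorem transitive_information
    {X Y Z : Type*} [Fintype X] [Fintype Y] [Fintype Z]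
    [Nonempty X] [Nonempty Y] [Nonempty Z]
    (p : X × Y × Z → ℝ)
    (hpos : ∀ w, 0 < p w)
    (hsum : ∑ w, p w = 1) :
    mutualInfo (fun xz : X × Z => ∑ y, p (xz.1, y, xz.2)) ≥
      mutualInfo (fun xy : X × Y => ∑ z, p (xy.1, xy.2, z)) +
        mutualInfo (fun yz : Y × Z => ∑ x, p (x, yz.1, yz.2)) -
        entropy (fun y => ∑ x, ∑ z, p (x, y, z)) := by
  have key := sum_log_marginals_le (fun x y z => p (x, y, z)) fun x y z => hpos (x, y, z)
  simp only [mul_sub, mul_add, Finset.sum_sub_distrib, Finset.sum_add_distrib] at key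
  -- Each entropy is rewritten as an average over the full joint distribution, in the order `y, x, z`.
  have hXY : entropy (fun xy : X × Y => ∑ z, p (xy.1, xy.2, z)) =
      -∑ y, ∑ x, ∑ z, p (x, y, z) * Real.log (∑ z', p (x, y, z')) := by
    simp only [entropy, Fintype.sum_prod_type, Finset.sum_mul]
    rw [Finset.sum_comm]
  have hYZ : entropy (fun yz : Y × Z => ∑ x, p (x, yz.1, yz.2)) =
      -∑ y, ∑ x, ∑ z, p (x, y, z) * Real.log (∑ x', p (x', y, z)) := by
    simp only [entropy, Fintype.sum_prod_type, Finset.sum_mul]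
    exact congrArg Neg.neg (Finset.sum_congr rfl fun y _ => Finset.sum_comm)
  have hXZ : entropy (fun xz : X × Z => ∑ y, p (xz.1, y, xz.2)) =
      -∑ y, ∑ x, ∑ z, p (x, y, z) * Real.log (∑ y', p (x, y', z)) := by
    simp only [entropy, Fintype.sum_prod_type, Finset.sum_mul]
    rw [Finset.sum_comm (s := (Finset.univ : Finset Y))]
    exact congrArg Neg.neg (Finset.sum_congr rfl fun x _ => Finset.sum_comm)
  have hY : entropy (fun y => ∑ x, ∑ z, p (x, y, z)) =
      -∑ y, ∑ x, ∑ z, p (x, y, z) * Real.log (∑ x', ∑ z', p (x', y, z')) := by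
    simp only [entropy, Finset.sum_mul]
  -- The one-variable marginals agree up to the order of summation.
  have eX : (fun x => ∑ z, ∑ y, p (x, y, z)) = fun x => ∑ y, ∑ z, p (x, y, z) :=
    funext fun x => Finset.sum_comm
  have eY : (fun y => ∑ z, ∑ x, p (x, y, z)) = fun y => ∑ x, ∑ z, p (x, y, z) :=
    funext fun y => Finset.sum_comm
  have eZ : (fun z => ∑ y, ∑ x, p (x, y, z)) = fun z => ∑ x, ∑ y, p (x, y, z) :=
    funext fun z => Finset.sum_comm
  simp only [mutualInfo]
  rw [hXY, hYZ, hXZ, eX, eY, eZ, hY]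
  linarith
end

section
/- (Barber–Agakov variational lower bound on mutual information.) Let X and Y be random variables on finite nonempty types with strictly positive joint pmf p(x,y), and let q(x|y) be any strictly positive family of conditional pmfs on the type of X indexed by values of Y. Then I(X;Y) ≥ E_{p(x,y)}[ log q(x|y) − log p(x) ], where p(x) is the marginal of p. -/
/-!
The gap between the two sides is `∑ p(x,y) log (p(x,y) / (q(x|y) p(y)))`, the conditional relative
entropy of `p(x|y)` from `q(x|y)`. It is nonnegative because `log t ≥ 1 - 1/t` bounds each summand
below by `p(x,y) - q(x|y) p(y)`, and these bounds sum to zero since each `q(·|y)` has total mass one.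
-/

open scoped BigOperators

/-- **Barber–Agakov variational lower bound on mutual information.**
For a strictly positive joint pmf `p(x,y)` and any strictly positive family of
conditional pmfs `q(x|y)`, `I(X;Y) ≥ E_{p(x,y)}[log q(x|y) − log p(x)]`. -/
theorem barber_agakov
    {X Y : Type*} [Fintype X] [Fintype Y] [Nonempty X] [Nonempty Y]
    (p : X × Y → ℝ)
    (hpos : ∀ w, 0 < p w) (hsum : ∑ w, p w = 1)
    (q : Y → X → ℝ)
    (hq : ∀ y x, 0 < q y x) (hqsum : ∀ y, ∑ x, q y x = 1) :
    (∑ x, ∑ y, p (x, y) *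
        Real.log (p (x, y) / ((∑ y', p (x, y')) * (∑ x', p (x', y))))) ≥
      ∑ x, ∑ y, p (x, y) * (Real.log (q y x) - Real.log (∑ y', p (x, y'))) := by
  have hX : ∀ x, 0 < ∑ y', p (x, y') := fun x =>
    Finset.sum_pos (fun y _ => hpos (x, y)) Finset.univ_nonempty
  have hY : ∀ y, 0 < ∑ x', p (x', y) := fun y =>
    Finset.sum_pos (fun x _ => hpos (x, y)) Finset.univ_nonempty
  have key : ∀ x y, p (x, y) * (Real.log (q y x) - Real.log (∑ y', p (x, y'))) +
      (p (x, y) - q y x * ∑ x', p (x', y)) ≤ p (x, y) *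
        Real.log (p (x, y) / ((∑ y', p (x, y')) * (∑ x', p (x', y)))) := by
    intro x y
    have hp := hpos (x, y)
    have h := mul_le_mul_of_nonneg_left (Real.log_le_sub_one_of_pos
      (div_pos (mul_pos (hq y x) (hY y)) hp)) hp.le
    rw [Real.log_div (mul_pos (hq y x) (hY y)).ne' hp.ne',
      Real.log_mul (hq y x).ne' (hY y).ne', mul_sub (p (x, y)) (_ / _) 1,
      mul_div_cancel₀ _ hp.ne'] at h
    rw [Real.log_div hp.ne' (mul_pos (hX x) (hY y)).ne', Real.log_mul (hX x).ne' (hY y).ne']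
    linarith
  have hzero : ∑ x, ∑ y, (p (x, y) - q y x * ∑ x', p (x', y)) = 0 := by
    rw [Finset.sum_comm]
    refine Finset.sum_eq_zero fun y _ => ?_
    rw [Finset.sum_sub_distrib, ← Finset.sum_mul, hqsum, one_mul, sub_self]
  have h := Finset.sum_le_sum fun x (_ : x ∈ Finset.univ) =>
    Finset.sum_le_sum fun y (_ : y ∈ Finset.univ) => key x y
  simp only [Finset.sum_add_distrib] at h
  rw [hzero, add_zero] at h
  exact h
end

section
/- With the VAE setup below, the expected per-datapoint KL regularizer decomposes exactly into an information term plus a marginal KL term: ∑_x q_D(x) KL(q(·|x)‖p(·)) = I_q(X;Z) + KL(q(·)‖p(·)), where q(x,z) = q(z|x) q_D(x), q(z) = ∑_x q(x,z) is the aggregated posterior, I_q(X;Z) is the mutual information of the joint q(x,z), and the last term is the KL divergence from the aggregated posterior to the prior p(z). -/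
/-!
All three terms are expectations under the joint `q(x,z) = q(z|x) q_D(x)`; for the marginal
term this is because `q(z)` is the `Z`-marginal of `q(x,z)`. The identity then holds pointwise
in `(x,z)`: `log (q(z|x) / p(z)) = log (q(x,z) / (q_D(x) q(z))) + log (q(z) / p(z))`, where
positivity of all the factors lets the logarithms split.
-/

open scoped BigOperators

/-- KL divergence (natural log) between two pmfs on a finite type. -/
noncomputable def klDiv {α : Type*} [Fintype α] (q p : α → ℝ) : ℝ :=
  ∑ a, q a * Real.log (q a / p a)

/-- Mutual information of the inference joint `q(x,z) = q(z|x) q_D(x)`. -/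
noncomputable def miQ {X Z : Type*} [Fintype X] [Fintype Z]
    (qD : X → ℝ) (enc : X → Z → ℝ) : ℝ :=
  ∑ x, ∑ z, (enc x z * qD x) *
    Real.log ((enc x z * qD x) / (qD x * (∑ x', enc x' z * qD x')))

/-- **Decomposition of the expected KL regularizer.**
`∑_x q_D(x) KL(q(·|x)‖p(·)) = I_q(X;Z) + KL(q(·)‖p(·))`,
where `q(z)` is the aggregated posterior. -/
theorem expected_kl_decomposition
    {X Z : Type*} [Fintype X] [Fintype Z] [Nonempty X] [Nonempty Z]
    (qD : X → ℝ) (enc : X → Z → ℝ) (prior : Z → ℝ)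
    (hqD : ∀ x, 0 < qD x) (hqDsum : ∑ x, qD x = 1)
    (henc : ∀ x z, 0 < enc x z) (hencsum : ∀ x, ∑ z, enc x z = 1)
    (hprior : ∀ z, 0 < prior z) (hpriorsum : ∑ z, prior z = 1) :
    (∑ x, qD x * klDiv (enc x) prior) =
      miQ qD enc + klDiv (fun z => ∑ x', enc x' z * qD x') prior := by
  have hagg : ∀ z, 0 < ∑ x', enc x' z * qD x' := fun z =>
    Finset.sum_pos (fun x _ => mul_pos (henc x z) (hqD x)) Finset.univ_nonempty
  -- The marginal KL term, written as an expectation under the joint `q(x,z)`.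
  have hmarg : klDiv (fun z => ∑ x', enc x' z * qD x') prior =
      ∑ x, ∑ z, (enc x z * qD x) * Real.log ((∑ x', enc x' z * qD x') / prior z) := by
    rw [Finset.sum_comm]
    simp only [klDiv, Finset.sum_mul]
  rw [hmarg, miQ, ← Finset.sum_add_distrib]
  refine Finset.sum_congr rfl fun x _ => ?_
  rw [klDiv, Finset.mul_sum, ← Finset.sum_add_distrib]
  refine Finset.sum_congr rfl fun z _ => ?_
  have hx := (hqD x).ne'
  have hz := (hagg z).ne'
  have hp := (hprior z).ne'
  have he := (henc x z).ne'
  rw [Real.log_div he hp, Real.log_div (mul_ne_zero he hx) (mul_ne_zero hx hz),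
    Real.log_div hz hp, Real.log_mul he hx, Real.log_mul hx hz]
  ring
end

section
/- (Upper bound on the conditional-prior KL via an auxiliary latent.) Let 𝒴, 𝒵, 𝒰 be finite nonempty types and suppose p(z,y,u) = p(y|u) p(z|u) p(u) with all factors strictly positive; set p(y) = ∑_u p(y|u) p(u) and p(z|y) = ∑_u p(z,y,u) / p(y). Let q(z|x) (for a fixed x) and q(u|y) be strictly positive conditional pmfs. Then KL(q(·|x)‖p(·|y)) ≤ ∑_u q(u|y) KL(q(·|x)‖p(·|u)) − ELBO(y,u) + log p(y), where ELBO(y,u) = ∑_u q(u|y) log p(y|u) − KL(q(·|y)‖p_U) and p_U is the prior p(u). -/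
/-!
The bound is the evidence lower bound applied, for each fixed `z`, to the marginal
`p(z,y) = ∑ u, p(z,y,u)` with variational distribution `q(u|y)`: by Jensen for `log`,
`log ∑ u, p(z,y,u) ≥ ∑ u, q(u|y) log (p(z,y,u) / q(u|y))`.
The factorisation of `p(z,y,u)` splits the right-hand side into a term depending on `z`, namely
`∑ u, q(u|y) log p(z|u)`, plus the ELBO for `log p(y)`. Averaging over `q(z|x)` turns the
`z`-dependent term into the averaged KL divergence, and the normalisation by `p(y)` contributes
`log p(y)`.
-/

open scoped BigOperators

/-- Jensen's inequality for `log` in variational form: the log of a positive sum is bounded below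
by its evidence lower bound under any strictly positive probability vector `q`. -/
lemma sum_mul_log_div_le_log_sum {U : Type*} [Fintype U] (q f : U → ℝ)
    (hq : ∀ u, 0 < q u) (hqsum : ∑ u, q u = 1) (hf : ∀ u, 0 < f u) :
    ∑ u, q u * Real.log (f u / q u) ≤ Real.log (∑ u, f u) := by
  have h := strictConcaveOn_log_Ioi.concaveOn.le_map_sum (t := Finset.univ) (w := q)
    (p := fun u => f u / q u) (fun u _ => (hq u).le) hqsum
    (fun u _ => div_pos (hf u) (hq u))
  have e : ∀ u, q u * (f u / q u) = f u := fun u => mul_div_cancel₀ (f u) (hq u).ne'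
  simpa only [smul_eq_mul, e] using h

/-- **Upper bound on the conditional-prior KL via an auxiliary latent.**
With `p(z,y,u) = p(y|u) p(z|u) p(u)`, `p(y) = ∑_u p(y|u)p(u)`,
`p(z|y) = ∑_u p(z,y,u)/p(y)`, variational conditionals `q(z|x)` (fixed `x`)
and `q(u|y)` (fixed `y`):
`KL(q(·|x)‖p(·|y)) ≤ ∑_u q(u|y) KL(q(·|x)‖p(·|u)) − ELBO(y,u) + log p(y)`,
where `ELBO(y,u) = ∑_u q(u|y) log p(y|u) − KL(q(·|y)‖p(u))`. -/
theorem semafo_kl_upper_bound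
    {Y Z U : Type*} [Fintype Y] [Fintype Z] [Fintype U]
    [Nonempty Y] [Nonempty Z] [Nonempty U]
    (pyu : U → Y → ℝ) (pzu : U → Z → ℝ) (pu : U → ℝ)
    (hpyu : ∀ u y, 0 < pyu u y) (hpyusum : ∀ u, ∑ y, pyu u y = 1)
    (hpzu : ∀ u z, 0 < pzu u z) (hpzusum : ∀ u, ∑ z, pzu u z = 1)
    (hpu : ∀ u, 0 < pu u) (hpusum : ∑ u, pu u = 1)
    (qz : Z → ℝ) (hqz : ∀ z, 0 < qz z) (hqzsum : ∑ z, qz z = 1)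
    (qu : U → ℝ) (hqu : ∀ u, 0 < qu u) (hqusum : ∑ u, qu u = 1)
    (y : Y) :
    klDiv qz (fun z => (∑ u, pzu u z * pyu u y * pu u) / (∑ u, pyu u y * pu u)) ≤
      (∑ u, qu u * klDiv qz (pzu u)) -
        ((∑ u, qu u * Real.log (pyu u y)) - klDiv qu pu) +
        Real.log (∑ u, pyu u y * pu u) := by
  set P := ∑ u, pyu u y * pu u with hP
  have hPpos : 0 < P :=
    Finset.sum_pos (fun u _ => mul_pos (hpyu u y) (hpu u)) Finset.univ_nonempty
  set C := (∑ u, qu u * Real.log (pyu u y)) - klDiv qu pu with hC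
  have key : ∀ z, Real.log (qz z / ((∑ u, pzu u z * pyu u y * pu u) / P)) ≤
      (∑ u, qu u * Real.log (qz z / pzu u z)) - C + Real.log P := by
    intro z
    have hpos : ∀ u, 0 < pzu u z * pyu u y * pu u := fun u =>
      mul_pos (mul_pos (hpzu u z) (hpyu u y)) (hpu u)
    have hS : 0 < ∑ u, pzu u z * pyu u y * pu u :=
      Finset.sum_pos (fun u _ => hpos u) Finset.univ_nonempty
    have hJ := sum_mul_log_div_le_log_sum qu (fun u => pzu u z * pyu u y * pu u) hqu hqusum hpos
    have hsplit : ∑ u, qu u * Real.log (pzu u z * pyu u y * pu u / qu u) =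
        Real.log (qz z) - (∑ u, qu u * Real.log (qz z / pzu u z)) + C := by
      have h1 : Real.log (qz z) = ∑ u, qu u * Real.log (qz z) := by
        rw [← Finset.sum_mul, hqusum, one_mul]
      rw [hC, klDiv, h1, ← Finset.sum_sub_distrib, ← Finset.sum_sub_distrib,
        ← Finset.sum_add_distrib]
      refine Finset.sum_congr rfl fun u _ => ?_
      rw [Real.log_div (hpos u).ne' (hqu u).ne',
        Real.log_mul (mul_pos (hpzu u z) (hpyu u y)).ne' (hpu u).ne',
        Real.log_mul (hpzu u z).ne' (hpyu u y).ne',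
        Real.log_div (hqz z).ne' (hpzu u z).ne', Real.log_div (hqu u).ne' (hpu u).ne']
      ring
    rw [Real.log_div (hqz z).ne' (div_pos hS hPpos).ne', Real.log_div hS.ne' hPpos.ne']
    linarith
  calc klDiv qz (fun z => (∑ u, pzu u z * pyu u y * pu u) / P)
      ≤ ∑ z, qz z * ((∑ u, qu u * Real.log (qz z / pzu u z)) - C + Real.log P) :=
        Finset.sum_le_sum fun z _ => mul_le_mul_of_nonneg_left (key z) (hqz z).le
    _ = (∑ u, qu u * klDiv qz (pzu u)) - C + Real.log P := by
        have hswap : ∑ z, qz z * ∑ u, qu u * Real.log (qz z / pzu u z) =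
            ∑ u, qu u * klDiv qz (pzu u) := by
          simp only [klDiv, Finset.mul_sum]
          rw [Finset.sum_comm]
          exact Finset.sum_congr rfl fun u _ => Finset.sum_congr rfl fun z _ => by ring
        simp only [mul_add, mul_sub, Finset.sum_add_distrib, Finset.sum_sub_distrib]
        rw [hswap, ← Finset.sum_mul, ← Finset.sum_mul, hqzsum, one_mul, one_mul]
end

section
/- (SemafoVAE final unsupervised objective is a lower bound on the evidence.) Let 𝒳, 𝒴, 𝒵, 𝒰 be finite nonempty types and suppose the generative model factorizes as p(x,y,z,u) = p(x|z) p(z|u) p(y|u) p(u) with all factors strictly positive. Let q(z|x), q(y|z), q(u|y) be strictly positive families of conditional pmfs. Then for every x, log p(x) ≥ E_{q(z|x)}[ log p(x|z) ] − E_{q(z|x) q(y|z) q(u|y)}[ KL(q(·|x)‖p(·|u)) ] + E_{q(z|x) q(y|z)}[ ELBO(y,u) ] − E_{q(z|x) q(y|z)}[ log q(y|z) ], where p(x) = ∑_{z,y,u} p(x|z) p(z|u) p(y|u) p(u). -/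
/-!
In the objective, the KL term averages `z` and `u` as if they were independent given `x`, so it is
not the ELBO of the joint `q(z|x) q(y|z) q(u|y)`. It is instead controlled by the ELBO of the
decoupled joint `q(z|x) r(y) q(u|y)`, where `r(y) = ∑_z q(z|x) q(y|z)` is the marginal of `y`: the
two expressions differ only in that the objective has the conditional entropy `H(y|z)` where the
decoupled ELBO has `H(r)`, and conditioning does not increase entropy. Both this comparison
(`entropy_cond_le`) and the bound of the decoupled ELBO by `log p(x)` are instances of Jensen's
inequality for `log` (`sum_mul_log_div_le`).
-/

/-- Jensen's inequality for `log`, in evidence-lower-bound form. -/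
lemma sum_mul_log_div_le {ι : Type*} [Fintype ι] (w p : ι → ℝ) (hw : ∀ i, 0 < w i)
    (hw1 : ∑ i, w i = 1) (hp : ∀ i, 0 < p i) :
    ∑ i, w i * Real.log (p i / w i) ≤ Real.log (∑ i, p i) := by
  have h := strictConcaveOn_log_Ioi.concaveOn.le_map_sum (t := Finset.univ) (w := w)
    (p := fun i => p i / w i) (fun i _ => (hw i).le) hw1 (fun i _ => div_pos (hp i) (hw i))
  simp only [smul_eq_mul] at h
  have e : ∑ i, w i * (p i / w i) = ∑ i, p i :=
    Finset.sum_congr rfl fun i _ => mul_div_cancel₀ _ (hw i).ne'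
  rwa [e] at h

/-- Averaging over `z` and then over `y` given `z` is averaging over the marginal of `y`. -/
lemma sum_mul_sum_eq_marginal {Y Z : Type*} [Fintype Y] [Fintype Z] (e : Z → ℝ) (q : Z → Y → ℝ)
    (F : Y → ℝ) :
    ∑ z, e z * ∑ y, q z y * F y = ∑ y, (∑ z, e z * q z y) * F y := by
  simp only [Finset.mul_sum, Finset.sum_mul]
  rw [Finset.sum_comm]
  simp only [mul_assoc]

/-- Conditioning does not increase entropy, written with negative entropies. -/
lemma entropy_cond_le {Y Z : Type*} [Fintype Y] [Fintype Z] (e : Z → ℝ) (q : Z → Y → ℝ)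
    (he : ∀ z, 0 < e z) (hq : ∀ z y, 0 < q z y) (hq1 : ∀ z, ∑ y, q z y = 1)
    (r : Y → ℝ) (hr : ∀ y, r y = ∑ z, e z * q z y) (hr0 : ∀ y, 0 < r y) (hr1 : ∑ y, r y = 1) :
    ∑ y, r y * Real.log (r y) ≤ ∑ z, e z * ∑ y, q z y * Real.log (q z y) := by
  have h1 : ∑ y, r y * Real.log (r y) = ∑ z, e z * ∑ y, q z y * Real.log (r y) := by
    rw [sum_mul_sum_eq_marginal]
    simp only [← hr]
  rw [h1]
  refine Finset.sum_le_sum fun z _ => mul_le_mul_of_nonneg_left ?_ (he z).le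
  have h := sum_mul_log_div_le (q z) r (hq z) (hq1 z) hr0
  rw [hr1, Real.log_one] at h
  simp only [fun y => Real.log_div (hr0 y).ne' (hq z y).ne', mul_sub, Finset.sum_sub_distrib] at h
  linarith

/-- The expectation of a sum of terms under a decoupled joint `e(z) r(y) q(u|y)`. -/
lemma decoupled_expectation {Y Z U : Type*} [Fintype Y] [Fintype Z] [Fintype U]
    (e : Z → ℝ) (r : Y → ℝ) (q : Y → U → ℝ) (he1 : ∑ z, e z = 1) (hr1 : ∑ y, r y = 1)
    (hq1 : ∀ y, ∑ u, q y u = 1) (A : Z → ℝ) (K : Z → U → ℝ) (G : Y → U → ℝ) (L : Y → ℝ) :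
    ∑ z, ∑ y, ∑ u, e z * r y * q y u * (A z - K z u + G y u - L y) =
      ∑ z, e z * A z - ∑ y, r y * ∑ u, q y u * ∑ z, e z * K z u +
        ∑ y, r y * ∑ u, q y u * G y u - ∑ y, r y * L y := by
  have hu : ∀ z y, ∑ u, e z * r y * q y u * (A z - K z u + G y u - L y) =
      r y * (e z * A z) - e z * r y * ∑ u, q y u * K z u + e z * (r y * ∑ u, q y u * G y u) -
        e z * (r y * L y) := by
    intro z y
    calc _ = ∑ u, (q y u * (r y * (e z * A z) - e z * (r y * L y)) -
              e z * r y * (q y u * K z u) + e z * r y * (q y u * G y u)) :=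
            Finset.sum_congr rfl fun u _ => by ring
      _ = _ := by
            rw [Finset.sum_add_distrib, Finset.sum_sub_distrib, ← Finset.sum_mul, hq1,
              ← Finset.mul_sum, ← Finset.mul_sum]
            ring
  have hK : ∑ z, ∑ y, e z * r y * ∑ u, q y u * K z u =
      ∑ y, r y * ∑ u, q y u * ∑ z, e z * K z u := by
    rw [Finset.sum_comm]
    refine Finset.sum_congr rfl fun y _ => ?_
    simp only [Finset.mul_sum]
    rw [Finset.sum_comm]
    exact Finset.sum_congr rfl fun u _ => Finset.sum_congr rfl fun z _ => by ring
  simp only [hu, Finset.sum_add_distrib, Finset.sum_sub_distrib, hK]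
  simp only [← Finset.sum_mul, ← Finset.mul_sum, he1, hr1, one_mul]


open scoped BigOperators

/-- The auxiliary ELBO `ELBO(y,u) = ∑_u q(u|y) log p(y|u) − KL(q(·|y)‖p(u))`. -/
noncomputable def elboYU {Y U : Type*} [Fintype U]
    (quy : Y → U → ℝ) (pyu : U → Y → ℝ) (pu : U → ℝ) (y : Y) : ℝ :=
  (∑ u, quy y u * Real.log (pyu u y)) - klDiv (quy y) pu

/-- **SemafoVAE final unsupervised objective lower-bounds the evidence.**
For the generative model `p(x,y,z,u) = p(x|z) p(z|u) p(y|u) p(u)` and inference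
conditionals `q(z|x)`, `q(y|z)`, `q(u|y)`:
`log p(x) ≥ E_{q(z|x)}[log p(x|z)]
  − E_{q(z|x)q(y|z)q(u|y)}[KL(q(·|x)‖p(·|u))]
  + E_{q(z|x)q(y|z)}[ELBO(y,u)] − E_{q(z|x)q(y|z)}[log q(y|z)]`. -/
theorem semafo_final_unsupervised_elbo
    {X Y Z U : Type*} [Fintype X] [Fintype Y] [Fintype Z] [Fintype U]
    [Nonempty X] [Nonempty Y] [Nonempty Z] [Nonempty U]
    (dec : Z → X → ℝ) (pzu : U → Z → ℝ) (pyu : U → Y → ℝ) (pu : U → ℝ)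
    (hdec : ∀ z x, 0 < dec z x) (hdecsum : ∀ z, ∑ x, dec z x = 1)
    (hpzu : ∀ u z, 0 < pzu u z) (hpzusum : ∀ u, ∑ z, pzu u z = 1)
    (hpyu : ∀ u y, 0 < pyu u y) (hpyusum : ∀ u, ∑ y, pyu u y = 1)
    (hpu : ∀ u, 0 < pu u) (hpusum : ∑ u, pu u = 1)
    (enc : X → Z → ℝ) (henc : ∀ x z, 0 < enc x z) (hencsum : ∀ x, ∑ z, enc x z = 1)
    (qyz : Z → Y → ℝ) (hqyz : ∀ z y, 0 < qyz z y) (hqyzsum : ∀ z, ∑ y, qyz z y = 1)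
    (quy : Y → U → ℝ) (hquy : ∀ y u, 0 < quy y u) (hquysum : ∀ y, ∑ u, quy y u = 1)
    (x : X) :
    Real.log (∑ z, ∑ y, ∑ u, dec z x * pzu u z * pyu u y * pu u) ≥
      (∑ z, enc x z * Real.log (dec z x)) -
        (∑ z, enc x z * ∑ y, qyz z y * ∑ u, quy y u * klDiv (enc x) (pzu u)) +
        (∑ z, enc x z * ∑ y, qyz z y * elboYU quy pyu pu y) -
        (∑ z, enc x z * ∑ y, qyz z y * Real.log (qyz z y)) := by
  obtain ⟨r, hr⟩ : ∃ r : Y → ℝ, ∀ y, r y = ∑ z, enc x z * qyz z y := ⟨_, fun _ => rfl⟩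
  have hr0 : ∀ y, 0 < r y := fun y => by
    rw [hr]
    exact Finset.sum_pos (fun z _ => mul_pos (henc x z) (hqyz z y)) Finset.univ_nonempty
  have hr1 : ∑ y, r y = 1 := by
    simp only [hr]
    rw [Finset.sum_comm]
    simp only [← Finset.mul_sum, hqyzsum, mul_one, hencsum]
  have hent := entropy_cond_le (enc x) qyz (henc x) hqyz hqyzsum r hr hr0 hr1
  have hw1 : ∑ i : Z × Y × U, enc x i.1 * r i.2.1 * quy i.2.1 i.2.2 = 1 := by
    simp only [Fintype.sum_prod_type, ← Finset.mul_sum, hquysum, mul_one, hr1, hencsum]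
  have hJ := sum_mul_log_div_le (fun i : Z × Y × U => enc x i.1 * r i.2.1 * quy i.2.1 i.2.2)
    (fun i => dec i.1 x * pzu i.2.2 i.1 * pyu i.2.2 i.2.1 * pu i.2.2)
    (fun i => mul_pos (mul_pos (henc _ _) (hr0 _)) (hquy _ _)) hw1
    (fun i => mul_pos (mul_pos (mul_pos (hdec _ _) (hpzu _ _)) (hpyu _ _)) (hpu _))
  simp only [Fintype.sum_prod_type] at hJ
  have hlog : ∀ z y u, Real.log (dec z x * pzu u z * pyu u y * pu u /
      (enc x z * r y * quy y u)) = Real.log (dec z x) - Real.log (enc x z / pzu u z) +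
        (Real.log (pyu u y) - Real.log (quy y u / pu u)) - Real.log (r y) := by
    intro z y u
    have h1 := (hdec z x).ne'
    have h2 := (hpzu u z).ne'
    have h3 := (hpyu u y).ne'
    have h4 := (hpu u).ne'
    have h5 := (henc x z).ne'
    have h6 := (hr0 y).ne'
    have h7 := (hquy y u).ne'
    rw [Real.log_div (by positivity) (by positivity), Real.log_mul (by positivity) h4,
      Real.log_mul (by positivity) h3, Real.log_mul h1 h2, Real.log_mul (by positivity) h7,
      Real.log_mul h5 h6, Real.log_div h5 h2, Real.log_div h7 h4]
    ring
  simp only [hlog] at hJ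
  rw [decoupled_expectation (enc x) r quy (hencsum x) hr1 hquysum (fun z => Real.log (dec z x))
    (fun z u => Real.log (enc x z / pzu u z))
    (fun y u => Real.log (pyu u y) - Real.log (quy y u / pu u)) (fun y => Real.log (r y))] at hJ
  rw [sum_mul_sum_eq_marginal (enc x) qyz (fun y => ∑ u, quy y u * klDiv (enc x) (pzu u)),
    sum_mul_sum_eq_marginal (enc x) qyz (fun y => elboYU quy pyu pu y)]
  have helbo : ∀ y, elboYU quy pyu pu y =
      ∑ u, quy y u * (Real.log (pyu u y) - Real.log (quy y u / pu u)) := fun y => by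
    simp only [elboYU, klDiv, mul_sub, Finset.sum_sub_distrib]
  simp only [← hr, helbo, klDiv]
  linarith
end

section
/- (SemafoVAE final supervised objective is a lower bound on the joint evidence.) Let 𝒳, 𝒴, 𝒵, 𝒰 be finite nonempty types and suppose the generative model factorizes as p(x,y,z,u) = p(x|z) p(z|u) p(y|u) p(u) with all factors strictly positive. Let q(z|x) and q(u|y) be strictly positive families of conditional pmfs. Then for every x and y, log p(x,y) ≥ E_{q(z|x)}[ log p(x|z) ] − E_{q(u|y)}[ KL(q(·|x)‖p(·|u)) ] + ELBO(y,u), where p(x,y) = ∑_{z,u} p(x|z) p(z|u) p(y|u) p(u). -/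
/-!
The right-hand side is the evidence lower bound for the mean-field variational law
`q(z|x) q(u|y)` on the pair of latent variables. Because both factors sum to one, every term of the
objective is an expectation under this product law, and the terms collect to
`∑ z, ∑ u, q(z|x) q(u|y) log (p(x,y,z,u) / (q(z|x) q(u|y)))`. Jensen's inequality for the
concave logarithm (`sum_mul_log_div_le_log_sum`) bounds this by `log p(x,y)`.
-/

open scoped BigOperators

/-- Jensen's inequality in its variational form: a positive unnormalized weight `f` satisfies
`E_w[log (f / w)] ≤ log ∑ f` for every positive pmf `w`. -/
theorem sum_mul_log_div_le_log_sum_s15 {ι : Type*} [Fintype ι] (w f : ι → ℝ)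
    (hw : ∀ i, 0 < w i) (hf : ∀ i, 0 < f i) (hsum : ∑ i, w i = 1) :
    ∑ i, w i * Real.log (f i / w i) ≤ Real.log (∑ i, f i) := by
  have h := strictConcaveOn_log_Ioi.concaveOn.le_map_sum (t := Finset.univ) (w := w)
    (p := fun i => f i / w i) (fun i _ => (hw i).le) hsum
    (fun i _ => Set.mem_Ioi.2 (div_pos (hf i) (hw i)))
  have e : ∀ i, w i * (f i / w i) = f i := fun i => mul_div_cancel₀ _ (hw i).ne'
  simpa only [smul_eq_mul, e] using h

/-- **SemafoVAE final supervised objective lower-bounds the joint evidence.**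
For the generative model `p(x,y,z,u) = p(x|z) p(z|u) p(y|u) p(u)` and inference
conditionals `q(z|x)`, `q(u|y)`:
`log p(x,y) ≥ E_{q(z|x)}[log p(x|z)] − E_{q(u|y)}[KL(q(·|x)‖p(·|u))] + ELBO(y,u)`. -/
theorem semafo_final_supervised_elbo
    {X Y Z U : Type*} [Fintype X] [Fintype Y] [Fintype Z] [Fintype U]
    [Nonempty X] [Nonempty Y] [Nonempty Z] [Nonempty U]
    (dec : Z → X → ℝ) (pzu : U → Z → ℝ) (pyu : U → Y → ℝ) (pu : U → ℝ)
    (hdec : ∀ z x, 0 < dec z x) (hdecsum : ∀ z, ∑ x, dec z x = 1)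
    (hpzu : ∀ u z, 0 < pzu u z) (hpzusum : ∀ u, ∑ z, pzu u z = 1)
    (hpyu : ∀ u y, 0 < pyu u y) (hpyusum : ∀ u, ∑ y, pyu u y = 1)
    (hpu : ∀ u, 0 < pu u) (hpusum : ∑ u, pu u = 1)
    (enc : X → Z → ℝ) (henc : ∀ x z, 0 < enc x z) (hencsum : ∀ x, ∑ z, enc x z = 1)
    (quy : Y → U → ℝ) (hquy : ∀ y u, 0 < quy y u) (hquysum : ∀ y, ∑ u, quy y u = 1)
    (x : X) (y : Y) :
    Real.log (∑ z, ∑ u, dec z x * pzu u z * pyu u y * pu u) ≥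
      (∑ z, enc x z * Real.log (dec z x)) -
        (∑ u, quy y u * klDiv (enc x) (pzu u)) +
        elboYU quy pyu pu y := by
  have hprod : ∑ i : Z × U, enc x i.1 * quy y i.2 = 1 := by
    rw [Fintype.sum_prod_type]
    simp only [← Finset.mul_sum, hquysum, mul_one, hencsum]
  have h := sum_mul_log_div_le_log_sum_s15 (fun i : Z × U => enc x i.1 * quy y i.2)
    (fun i => dec i.1 x * pzu i.2 i.1 * pyu i.2 y * pu i.2)
    (fun i => mul_pos (henc _ _) (hquy _ _))
    (fun i => mul_pos (mul_pos (mul_pos (hdec _ _) (hpzu _ _)) (hpyu _ _)) (hpu _)) hprod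
  simp only [Fintype.sum_prod_type] at h
  refine ge_iff_le.2 (le_trans (le_of_eq ?_) h)
  -- A function of one latent variable has the same mean under its factor and under the product.
  have hz : ∀ g : Z → ℝ, ∑ z, enc x z * g z = ∑ z, ∑ u, enc x z * quy y u * g z := fun g => by
    simp only [← Finset.sum_mul, ← Finset.mul_sum, hquysum, mul_one]
  have hu : ∀ g : U → ℝ, ∑ u, quy y u * g u = ∑ z, ∑ u, enc x z * quy y u * g u := fun g => by
    rw [Finset.sum_comm]
    simp only [← Finset.sum_mul, hencsum, one_mul]
  have hkl : ∑ u, quy y u * klDiv (enc x) (pzu u) =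
      ∑ z, ∑ u, enc x z * quy y u * Real.log (enc x z / pzu u z) := by
    rw [Finset.sum_comm]
    simp only [klDiv, Finset.mul_sum]
    exact Finset.sum_congr rfl fun u _ => Finset.sum_congr rfl fun z _ => by ring
  rw [hkl, elboYU, klDiv, hz, hu, hu]
  simp only [← Finset.sum_sub_distrib, ← Finset.sum_add_distrib]
  refine Finset.sum_congr rfl fun z _ => Finset.sum_congr rfl fun u _ => ?_
  have h1 := (hdec z x).ne'
  have h2 := (hpzu u z).ne'
  have h3 := (hpyu u y).ne'
  have h4 := (hpu u).ne'
  have h5 := (henc x z).ne'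
  have h6 := (hquy y u).ne'
  rw [Real.log_div h5 h2, Real.log_div h6 h4,
    Real.log_div (mul_ne_zero (mul_ne_zero (mul_ne_zero h1 h2) h3) h4) (mul_ne_zero h5 h6),
    Real.log_mul (mul_ne_zero (mul_ne_zero h1 h2) h3) h4, Real.log_mul (mul_ne_zero h1 h2) h3,
    Real.log_mul h1 h2, Real.log_mul h5 h6]
  ring
end

section
/- (Supervised ELBO gap decomposition in the proof that SemafoVAE maximizes mutual information.) Let 𝒳, 𝒴, 𝒵 be finite nonempty types, p(x,y,z) a strictly positive joint pmf with marginals p(y) = ∑_{x,z} p(x,y,z), p(x,y) = ∑_z p(x,y,z), and conditional p(x,z|y) = p(x,y,z)/p(y). Let the inference model factorize as q(x,y,z) = q(x) q(y) q(z|x) with q(x), q(y), q(z|x) strictly positive, and write q_{XZ}(x,z) = q(x) q(z|x) and q_{XY}(x,y) = q(x) q(y). Then ∑_{x,y} q(x) q(y) ( ∑_z q(z|x) log ( p(x,y,z) / q(z|x) ) − log p(x,y) ) = − ∑_y q(y) KL( q_{XZ} ‖ p(·,·|y) ) − KL( q_Y ‖ p_Y ) + KL( q_{XY} ‖ p_{XY}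 ), where q_Y, p_Y denote the pmfs q(y), p(y) and p_{XY} the marginal p(x,y). -/
/-!
Each term on the right is an expectation under `q(x) q(y)`. The conditional divergence at `y` equals
`∑ₓ q(x) (log q(x) + log p(y) - E(x, y))`, where `E(x, y) = ∑_z q(z|x) log (p(x,y,z) / q(z|x))`
is the ELBO term: the product inside the logarithm splits and the encoder sums to one
(`klDiv_encoder_cond`). The other two have integrands `log q(y) - log p(y)` and
`log q(x) + log q(y) - log p(x,y)`. In the signed combination `log q(x)`, `log q(y)` and `log p(y)`
cancel, leaving `E(x, y) - log p(x,y)`.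
-/

open scoped BigOperators

/-- Divergence of the encoder joint `a(x) e(z|x)` from an unnormalized weight `r` divided by a
constant `c`, reduced to an expectation over `x` of the ELBO-type term; `c` need not be the total
mass of `r`. -/
theorem klDiv_encoder_cond {X Z : Type*} [Fintype X] [Fintype Z]
    (r : X × Z → ℝ) (hr : ∀ w, 0 < r w) (c : ℝ) (hc : 0 < c)
    (a : X → ℝ) (ha : ∀ x, 0 < a x)
    (e : X → Z → ℝ) (he : ∀ x z, 0 < e x z) (he1 : ∀ x, ∑ z, e x z = 1) :
    klDiv (fun w : X × Z => a w.1 * e w.1 w.2) (fun w => r w / c) =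
      ∑ x, a x * (Real.log (a x) + Real.log c -
        ∑ z, e x z * Real.log (r (x, z) / e x z)) := by
  unfold klDiv
  rw [Fintype.sum_prod_type]
  refine Finset.sum_congr rfl fun x _ => ?_
  have hz : ∀ z, a x * e x z * Real.log (a x * e x z / (r (x, z) / c)) =
      a x * (e x z * (Real.log (a x) + Real.log c) -
        e x z * Real.log (r (x, z) / e x z)) := fun z => by
    have h1 := (ha x).ne'
    have h2 := (he x z).ne'
    have h3 := (hr (x, z)).ne'
    rw [Real.log_div (mul_ne_zero h1 h2) (div_ne_zero h3 hc.ne'), Real.log_mul h1 h2,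
      Real.log_div h3 hc.ne', Real.log_div h3 h2]
    ring
  simp only [hz]
  rw [← Finset.mul_sum, Finset.sum_sub_distrib, ← Finset.sum_mul, he1, one_mul]

/-- **Supervised ELBO gap decomposition** (from the proof that SemafoVAE maximizes
mutual information).  For a strictly positive joint `p(x,y,z)` and inference model
`q(x,y,z) = q(x) q(y) q(z|x)`:
`∑_{x,y} q(x)q(y) (∑_z q(z|x) log(p(x,y,z)/q(z|x)) − log p(x,y))
 = −∑_y q(y) KL(q_{XZ}‖p(·,·|y)) − KL(q_Y‖p_Y) + KL(q_{XY}‖p_{XY})`. -/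
theorem supervised_elbo_gap_decomposition
    {X Y Z : Type*} [Fintype X] [Fintype Y] [Fintype Z]
    [Nonempty X] [Nonempty Y] [Nonempty Z]
    (p : X × Y × Z → ℝ)
    (hpos : ∀ w, 0 < p w) (hsum : ∑ w, p w = 1)
    (qX : X → ℝ) (hqX : ∀ x, 0 < qX x) (hqXsum : ∑ x, qX x = 1)
    (qY : Y → ℝ) (hqY : ∀ y, 0 < qY y) (hqYsum : ∑ y, qY y = 1)
    (enc : X → Z → ℝ) (henc : ∀ x z, 0 < enc x z) (hencsum : ∀ x, ∑ z, enc x z = 1) :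
    (∑ x, ∑ y, qX x * qY y *
        ((∑ z, enc x z * Real.log (p (x, y, z) / enc x z)) -
          Real.log (∑ z, p (x, y, z)))) =
      -(∑ y, qY y *
          klDiv (fun xz : X × Z => qX xz.1 * enc xz.1 xz.2)
            (fun xz : X × Z => p (xz.1, y, xz.2) / (∑ x, ∑ z, p (x, y, z)))) -
        klDiv qY (fun y => ∑ x, ∑ z, p (x, y, z)) +
        klDiv (fun xy : X × Y => qX xy.1 * qY xy.2)
          (fun xy : X × Y => ∑ z, p (xy.1, xy.2, z)) := by
  have hpy : ∀ y, 0 < ∑ x, ∑ z, p (x, y, z) := fun y =>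
    Finset.sum_pos (fun x _ => Finset.sum_pos (fun z _ => hpos _) Finset.univ_nonempty)
      Finset.univ_nonempty
  have hpxy : ∀ x y, 0 < ∑ z, p (x, y, z) := fun x y =>
    Finset.sum_pos (fun z _ => hpos _) Finset.univ_nonempty
  have hcond : ∀ y, klDiv (fun xz : X × Z => qX xz.1 * enc xz.1 xz.2)
      (fun xz : X × Z => p (xz.1, y, xz.2) / (∑ x, ∑ z, p (x, y, z))) =
      ∑ x, qX x * (Real.log (qX x) + Real.log (∑ x, ∑ z, p (x, y, z)) -
        ∑ z, enc x z * Real.log (p (x, y, z) / enc x z)) := fun y =>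
    klDiv_encoder_cond (fun w : X × Z => p (w.1, y, w.2)) (fun _ => hpos _) _ (hpy y)
      qX hqX enc henc hencsum
  -- Inserting `∑ₓ q(x) = 1` turns the divergence in `y` into a sum over pairs.
  have hY : klDiv qY (fun y => ∑ x, ∑ z, p (x, y, z)) =
      ∑ x, ∑ y, qX x * (qY y * (Real.log (qY y) - Real.log (∑ x, ∑ z, p (x, y, z)))) := by
    simp only [← Finset.mul_sum]
    rw [← Finset.sum_mul, hqXsum, one_mul]
    unfold klDiv
    refine Finset.sum_congr rfl fun y _ => ?_
    rw [Real.log_div (hqY y).ne' (hpy y).ne']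
  have hXY : klDiv (fun xy : X × Y => qX xy.1 * qY xy.2)
      (fun xy : X × Y => ∑ z, p (xy.1, xy.2, z)) =
      ∑ x, ∑ y, qX x * qY y *
        (Real.log (qX x) + Real.log (qY y) - Real.log (∑ z, p (x, y, z))) := by
    unfold klDiv
    rw [Fintype.sum_prod_type]
    refine Finset.sum_congr rfl fun x _ => Finset.sum_congr rfl fun y _ => ?_
    rw [Real.log_div (mul_ne_zero (hqX x).ne' (hqY y).ne') (hpxy x y).ne',
      Real.log_mul (hqX x).ne' (hqY y).ne']
  have hXZ : (∑ y, qY y * klDiv (fun xz : X × Z => qX xz.1 * enc xz.1 xz.2)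
      (fun xz : X × Z => p (xz.1, y, xz.2) / (∑ x, ∑ z, p (x, y, z)))) =
      ∑ x, ∑ y, qY y * (qX x * (Real.log (qX x) + Real.log (∑ x, ∑ z, p (x, y, z)) -
        ∑ z, enc x z * Real.log (p (x, y, z) / enc x z))) := by
    rw [Finset.sum_comm]
    refine Finset.sum_congr rfl fun y _ => ?_
    rw [hcond, Finset.mul_sum]
  rw [hXZ, hY, hXY, ← Finset.sum_neg_distrib,
    ← Finset.sum_sub_distrib, ← Finset.sum_add_distrib]
  refine Finset.sum_congr rfl fun x _ => ?_
  rw [← Finset.sum_neg_distrib, ← Finset.sum_sub_distrib, ← Finset.sum_add_distrib]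
  refine Finset.sum_congr rfl fun y _ => ?_
  ring
end
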